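/- arXiv:2503.20319 — 5 statements merged into one kernel-verified Lean document; each statement's English description precedes it below -/
import Mathlib

section
/- Let n, q be positive integers, let Ē, A : Matrix (Fin n) (Fin n) ℂ and Ξ : Matrix (Fin q) (Fin q) ℂ. Assume that for every eigenvalue λ of Ξ (i.e., every λ in the spectrum of Ξ over ℂ) the matrix λ • Ē − A is invertible. Then the homogeneous generalized Sylvester equation has only the trivial solution: every X : Matrix (Fin n) (Fin q) ℂ satisfying Ē * X * Ξ = A * X is the zero matrix. -/
/-!
The equation `Ē X Ξ = A X` gives `Ē X (Ξ - μ) = -(μ Ē - A) X` for every scalar `μ`. If `μ` is an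
eigenvalue of `Ξ`, then `μ Ē - A` is injective, so `X (Ξ - μ) v = 0` forces `X v = 0`. By induction
`X` kills every generalized eigenvector of `Ξ`, and over `ℂ` these span the whole space.
-/

/-- The inductive step along a chain of generalized eigenvectors: `(μ Ē - A) X v = 0` follows from
`X (Ξ - μ) v = 0` and the Sylvester equation, and `μ Ē - A` is injective. -/
lemma mulVec_eq_zero_of_step {n q : ℕ}
    {Ebar A : Matrix (Fin n) (Fin n) ℂ} {Ξ : Matrix (Fin q) (Fin q) ℂ}
    {X : Matrix (Fin n) (Fin q) ℂ} (hX : Ebar * X * Ξ = A * X) {μ : ℂ}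
    (hμ : IsUnit (μ • Ebar - A)) {v : Fin q → ℂ}
    (hv : X.mulVec (Ξ.mulVec v - μ • v) = 0) : X.mulVec v = 0 := by
  apply Matrix.mulVec_injective_of_isUnit hμ
  have h1 : Ebar.mulVec (X.mulVec (Ξ.mulVec v)) = A.mulVec (X.mulVec v) := by
    simpa only [Matrix.mulVec_mulVec, Matrix.mul_assoc] using congrArg (fun M => M.mulVec v) hX
  have h2 : X.mulVec (Ξ.mulVec v) = μ • X.mulVec v := by
    rwa [Matrix.mulVec_sub, Matrix.mulVec_smul, sub_eq_zero] at hv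
  rw [h2, Matrix.mulVec_smul] at h1
  rw [Matrix.sub_mulVec, Matrix.smul_mulVec, h1, sub_self, Matrix.mulVec_zero]

/-- If every eigenvalue `λ` of `Ξ` makes `λ • Ē − A` invertible, then the
homogeneous generalized Sylvester equation `Ē * X * Ξ = A * X` has only the trivial
solution. -/
theorem stmt_0 (n q : ℕ) (hn : 0 < n) (hq : 0 < q)
    (Ebar A : Matrix (Fin n) (Fin n) ℂ) (Ξ : Matrix (Fin q) (Fin q) ℂ)
    (h : ∀ lam ∈ spectrum ℂ Ξ, IsUnit (lam • Ebar - A)) :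
    ∀ X : Matrix (Fin n) (Fin q) ℂ, Ebar * X * Ξ = A * X → X = 0 := by
  intro X hX
  let f : Module.End ℂ (Fin q → ℂ) := Matrix.toLin' Ξ
  have key : ∀ (μ : ℂ) (k : ℕ) (v : Fin q → ℂ),
      ((f - algebraMap ℂ _ μ) ^ k) v = 0 → X.mulVec v = 0 := by
    intro μ k
    by_cases hμ : μ ∈ spectrum ℂ Ξ
    · induction k with
      | zero =>
        intro v hv
        have hv0 : v = 0 := by simpa using hv
        rw [hv0, Matrix.mulVec_zero]
      | succ k ih =>
        intro v hv
        rw [pow_succ, Module.End.mul_apply] at hv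
        exact mulVec_eq_zero_of_step hX (h μ hμ) (ih _ hv)
    · -- Off the spectrum, `f - μ` is invertible, so it has no nonzero generalized eigenvector.
      intro v hv
      rw [← Matrix.spectrum_toLin', spectrum.notMem_iff, ← IsUnit.neg_iff, neg_sub] at hμ
      have hinj := ((Module.End.isUnit_iff _).1 (hμ.pow k)).injective
      have hv0 : v = 0 := hinj (hv.trans (map_zero _).symm)
      rw [hv0, Matrix.mulVec_zero]
  have hker : LinearMap.ker (Matrix.toLin' X) = ⊤ := by
    rw [eq_top_iff, ← Module.End.iSup_maxGenEigenspace_eq_top f]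
    refine iSup_le fun μ v hv => ?_
    obtain ⟨k, hk⟩ := (Module.End.mem_maxGenEigenspace f μ v).1 hv
    rw [LinearMap.mem_ker, Matrix.toLin'_apply]
    exact key μ k v (by rwa [Algebra.algebraMap_eq_smul_one])
  exact (LinearEquiv.map_eq_zero_iff _).1 (LinearMap.ker_eq_top.1 hker)
end

section
/- Let n, q be positive integers, let Ē, A : Matrix (Fin n) (Fin n) ℂ, Ξ : Matrix (Fin q) (Fin q) ℂ, and B : Matrix (Fin n) (Fin q) ℂ. Assume that for every eigenvalue λ of Ξ over ℂ the matrix λ • Ē − A is invertible. Then there exists a unique X : Matrix (Fin n) (Fin q) ℂ such that A * X + B = Ē * X * Ξ. -/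
/-!
The equation reads `L X = B` for the linear map `L X = Ē X Ξ - A X` on a finite-dimensional space,
so it suffices that `ker L = 0`. The kernel is stable under `X ↦ X Ξ`; were it nonzero, this map
would have an eigenvector `X ≠ 0` there, `X Ξ = μ X`. Then `X (μ - Ξ) = 0` puts `μ` in the spectrum
of `Ξ`, while `L X = 0` becomes `(μ Ē - A) X = 0`, contradicting the invertibility of `μ Ē - A`.
-/

/-- The Sylvester operator `X ↦ Ē X Ξ - A X`. -/
def sylvesterMap {n q : ℕ} (Ebar A : Matrix (Fin n) (Fin n) ℂ) (Ξ : Matrix (Fin q) (Fin q) ℂ) :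
    Matrix (Fin n) (Fin q) ℂ →ₗ[ℂ] Matrix (Fin n) (Fin q) ℂ where
  toFun X := Ebar * X * Ξ - A * X
  map_add' X Y := by
    simp only [Matrix.mul_add, Matrix.add_mul]
    abel
  map_smul' c X := by
    simp [smul_sub]

/-- Right multiplication by `Ξ` on rectangular matrices. -/
def rightMulMap {n q : ℕ} (Ξ : Matrix (Fin q) (Fin q) ℂ) :
    Module.End ℂ (Matrix (Fin n) (Fin q) ℂ) where
  toFun X := X * Ξ
  map_add' X Y := Matrix.add_mul X Y Ξ
  map_smul' c X := by simp

lemma sylvesterMap_ker_eq_bot {n q : ℕ} (Ebar A : Matrix (Fin n) (Fin n) ℂ)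
    (Ξ : Matrix (Fin q) (Fin q) ℂ)
    (h : ∀ lam ∈ spectrum ℂ Ξ, IsUnit (lam • Ebar - A)) :
    LinearMap.ker (sylvesterMap Ebar A Ξ) = ⊥ := by
  by_contra hne
  have hnt : Nontrivial (LinearMap.ker (sylvesterMap Ebar A Ξ)) :=
    Submodule.nontrivial_iff_ne_bot.mpr hne
  have hinv : ∀ X ∈ LinearMap.ker (sylvesterMap Ebar A Ξ),
      rightMulMap Ξ X ∈ LinearMap.ker (sylvesterMap Ebar A Ξ) := by
    intro X hX
    have hX' : Ebar * X * Ξ - A * X = 0 := hX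
    change Ebar * (X * Ξ) * Ξ - A * (X * Ξ) = 0
    rw [← Matrix.mul_assoc, ← Matrix.mul_assoc, ← Matrix.sub_mul, hX', Matrix.zero_mul]
  obtain ⟨μ, hμ⟩ := Module.End.exists_eigenvalue ((rightMulMap Ξ).restrict hinv)
  obtain ⟨⟨X, hX⟩, hev⟩ := hμ.exists_hasEigenvector
  have hX0 : X ≠ 0 := fun h0 => hev.2 (Subtype.ext h0)
  have hXμ : X * Ξ = μ • X := congrArg Subtype.val hev.apply_eq_smul
  have hX' : Ebar * X * Ξ - A * X = 0 := hX
  have hspec : μ ∈ spectrum ℂ Ξ := by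
    intro hu
    obtain ⟨V, hV⟩ := hu.exists_right_inv
    apply hX0
    have hz : X * (algebraMap ℂ (Matrix (Fin q) (Fin q) ℂ) μ - Ξ) = 0 := by
      rw [Matrix.mul_sub, hXμ, Algebra.algebraMap_eq_smul_one]
      simp
    rw [← Matrix.mul_one X, ← hV, ← Matrix.mul_assoc, hz, Matrix.zero_mul]
  obtain ⟨V, hV⟩ := (h μ hspec).exists_left_inv
  have hz : (μ • Ebar - A) * X = 0 := by
    rw [← hX', Matrix.mul_assoc, hXμ, Matrix.sub_mul]
    simp
  exact hX0 (by rw [← Matrix.one_mul X, ← hV, Matrix.mul_assoc, hz, Matrix.mul_zero])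

/-- If every eigenvalue `λ` of `Ξ` makes `λ • Ē − A` invertible, then the
generalized Sylvester equation `A * X + B = Ē * X * Ξ` has a unique solution. -/
theorem stmt_1 (n q : ℕ) (hn : 0 < n) (hq : 0 < q)
    (Ebar A : Matrix (Fin n) (Fin n) ℂ) (Ξ : Matrix (Fin q) (Fin q) ℂ)
    (B : Matrix (Fin n) (Fin q) ℂ)
    (h : ∀ lam ∈ spectrum ℂ Ξ, IsUnit (lam • Ebar - A)) :
    ∃! X : Matrix (Fin n) (Fin q) ℂ, A * X + B = Ebar * X * Ξ := by
  have hinj : Function.Injective (sylvesterMap Ebar A Ξ) :=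
    LinearMap.ker_eq_bot.mp (sylvesterMap_ker_eq_bot Ebar A Ξ h)
  have hbij : Function.Bijective (sylvesterMap Ebar A Ξ) :=
    ⟨hinj, LinearMap.injective_iff_surjective.mp hinj⟩
  have hiff (X : Matrix (Fin n) (Fin q) ℂ) :
      A * X + B = Ebar * X * Ξ ↔ sylvesterMap Ebar A Ξ X = B := by
    change _ ↔ Ebar * X * Ξ - A * X = B
    rw [sub_eq_iff_eq_add', eq_comm]
  simpa only [hiff] using hbij.existsUnique B
end

section
/- Let n, q be positive integers, λ : Fin q → ℂ with (λ j) • Ē − A invertible for every j, let Ē, A : Matrix (Fin n) (Fin n) ℂ, B : Matrix (Fin n) (Fin m) ℂ, Π : Matrix (Fin m) (Fin q) ℂ, C : Matrix (Fin p) (Fin n) ℂ, D : Matrix (Fin p) (Fin m) ℂ. If X : Matrix (Fin n) (Fin q) ℂ satisfies A * X + B * Π = Ē * X * (Matrix.diagonal λ), then for every j the j-th column of C * X + D * Π equals (C * ((λ j) • Ē − A)⁻¹ * B + D).mulVec (column j of Π), i.e., it equals the right tangential interpolation H(λ j) π_j of the transfer function H(s) = C(sĒ − A)⁻¹B + D at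 the point λ j along the direction π_j given by the j-th column of Π. -/
/-!
Because the input generator is diagonal, the Sylvester equation decouples into columns:
`A x_j + B π_j = λ_j Ē x_j`, that is `(λ_j Ē - A) x_j = B π_j`. Invertibility of the pencil at `λ_j`
gives `x_j = (λ_j Ē - A)⁻¹ B π_j`, and substituting this into `C x_j + D π_j` yields `H(λ_j) π_j`.
-/

/-- Corollary 1: If `X` solves the Sylvester equation
`A * X + B * Π = Ē * X * diagonal λ`, then the `j`-th column of the steady-state
response matrix `C * X + D * Π` equals the right tangential interpolation
`H(λ j) π_j = (C ((λ j) Ē − A)⁻¹ B + D) π_j`, where `π_j` is the `j`-th column of `Π`. -/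
theorem stmt_4 (n q m p : ℕ) (hn : 0 < n) (hq : 0 < q) (lam : Fin q → ℂ)
    (Ebar A : Matrix (Fin n) (Fin n) ℂ)
    (B : Matrix (Fin n) (Fin m) ℂ) (Pi : Matrix (Fin m) (Fin q) ℂ)
    (C : Matrix (Fin p) (Fin n) ℂ) (D : Matrix (Fin p) (Fin m) ℂ)
    (h : ∀ j, IsUnit (lam j • Ebar - A))
    (X : Matrix (Fin n) (Fin q) ℂ)
    (hX : A * X + B * Pi = Ebar * X * Matrix.diagonal lam) :
    ∀ j, (fun i => (C * X + D * Pi) i j)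
      = (C * (lam j • Ebar - A)⁻¹ * B + D).mulVec (fun i => Pi i j) := by
  intro j
  -- The `j`-th column of the Sylvester equation: `A x_j + B π_j = λ_j Ē x_j`.
  have hcol : A.mulVec (X.col j) + B.mulVec (Pi.col j) = lam j • Ebar.mulVec (X.col j) := by
    ext i
    have hij := congrFun (congrFun hX i) j
    rw [Matrix.mul_diagonal, mul_comm] at hij
    exact hij
  have hres : (lam j • Ebar - A).mulVec (X.col j) = B.mulVec (Pi.col j) := by
    rw [Matrix.sub_mulVec, Matrix.smul_mulVec, ← hcol, add_sub_cancel_left]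
  have hx : X.col j = (lam j • Ebar - A)⁻¹.mulVec (B.mulVec (Pi.col j)) := by
    rw [← hres, Matrix.mulVec_mulVec,
      Matrix.nonsing_inv_mul _ ((Matrix.isUnit_iff_isUnit_det _).mp (h j)), Matrix.one_mulVec]
  change C.mulVec (X.col j) + D.mulVec (Pi.col j) = _
  rw [hx, Matrix.add_mulVec, ← Matrix.mulVec_mulVec, ← Matrix.mulVec_mulVec]
  rfl
end

section
/- Let M, k be positive integers, Ψ : Matrix (Fin M) (Fin k) ℝ, and s > 0 such that for every x : Fin k → ℝ, the Euclidean norms satisfy s · ‖x‖ ≤ ‖Ψ.mulVec x‖. Then Ψᵀ * Ψ is invertible, and for every κ : Fin M → ℝ and every θ : Fin k → ℝ, ‖ ((Ψᵀ * Ψ)⁻¹ * Ψᵀ).mulVec κ − θ ‖ ≤ ‖ κ − Ψ.mulVec θ ‖ / s, where all norms are Euclidean (ℓ²) norms. -/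
/-!
Write `e = θ̂ - θ` for the error and `r = κ - Ψ θ` for the residual. The normal equations give
`ΨᵀΨ e = Ψᵀ r`, so `r - Ψ e` is orthogonal to `Ψ e`; hence `‖Ψ e‖ ≤ ‖r‖` by Pythagoras, and
`s ‖e‖ ≤ ‖Ψ e‖` finishes the bound. Invertibility of `ΨᵀΨ` follows from its kernel being that
of `Ψ`, which is trivial because `s > 0`.
-/


/-- Euclidean (ℓ²) norm of a finite real vector. -/
noncomputable def euclNorm {d : ℕ} (v : Fin d → ℝ) : ℝ := Real.sqrt (∑ i, (v i) ^ 2)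

open Matrix in
theorem euclNorm_eq_sqrt_dotProduct {d : ℕ} (v : Fin d → ℝ) :
    euclNorm v = Real.sqrt (v ⬝ᵥ v) := by
  simp [euclNorm, dotProduct, sq]

open Matrix in
theorem mulVec_dotProduct_eq {m n : ℕ} (A : Matrix (Fin m) (Fin n) ℝ) (x : Fin n → ℝ)
    (y : Fin m → ℝ) : A *ᵥ x ⬝ᵥ y = x ⬝ᵥ Aᵀ *ᵥ y := by
  rw [dotProduct_comm, dotProduct_mulVec, dotProduct_comm, mulVec_transpose]

theorem dotProduct_self_nonneg {d : ℕ} (v : Fin d → ℝ) : 0 ≤ v ⬝ᵥ v :=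
  Finset.sum_nonneg fun i _ => mul_self_nonneg (v i)

/-- least-squares error bound, inequality (24): if the smallest singular
value of `Ψ` is at least `s > 0` (i.e. `s‖x‖ ≤ ‖Ψx‖` for all `x`, in Euclidean norms),
then `ΨᵀΨ` is invertible and the least-squares estimate `θ̂ = (ΨᵀΨ)⁻¹Ψᵀκ` deviates from
any reference `θ` by at most `‖κ − Ψθ‖ / s`. -/
theorem stmt_12 (M k : ℕ) (hM : 0 < M) (hk : 0 < k)
    (Ψ : Matrix (Fin M) (Fin k) ℝ) (s : ℝ) (hs : 0 < s)
    (hsing : ∀ x : Fin k → ℝ, s * euclNorm x ≤ euclNorm (Ψ.mulVec x)) :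
    IsUnit (Ψ.transpose * Ψ) ∧
      ∀ (κ : Fin M → ℝ) (θ : Fin k → ℝ),
        euclNorm (((Ψ.transpose * Ψ)⁻¹ * Ψ.transpose).mulVec κ - θ)
          ≤ euclNorm (κ - Ψ.mulVec θ) / s := by
  have hunit : IsUnit (Ψ.transpose * Ψ) := by
    rw [← Matrix.mulVec_injective_iff_isUnit]
    refine (injective_iff_map_eq_zero (Ψ.transpose * Ψ).mulVecLin).2 fun x hx => ?_
    rw [Matrix.mulVecLin_apply, ← Matrix.mulVec_mulVec] at hx
    have hΨ := mulVec_dotProduct_eq Ψ x (Ψ.mulVec x)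
    rw [hx, dotProduct_zero] at hΨ
    have h := hsing x
    rw [euclNorm_eq_sqrt_dotProduct (Ψ.mulVec x), hΨ, Real.sqrt_zero,
      euclNorm_eq_sqrt_dotProduct] at h
    have hx0 : Real.sqrt (x ⬝ᵥ x) ≤ 0 := by
      by_contra! hpos
      exact absurd (mul_pos hs hpos) h.not_gt
    exact dotProduct_self_eq_zero.1
      (le_antisymm (Real.sqrt_eq_zero'.1 (le_antisymm hx0 (Real.sqrt_nonneg _)))
        (dotProduct_self_nonneg x))
  refine ⟨hunit, fun κ θ => ?_⟩
  have hdet := (Matrix.isUnit_iff_isUnit_det _).1 hunit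
  set e := ((Ψ.transpose * Ψ)⁻¹ * Ψ.transpose).mulVec κ - θ with he
  set r := κ - Ψ.mulVec θ with hr
  have hnormal : Ψ.transpose.mulVec (Ψ.mulVec e) = Ψ.transpose.mulVec r := by
    rw [he, hr, Matrix.mulVec_sub, Matrix.mulVec_sub, Matrix.mulVec_sub, Matrix.mulVec_mulVec,
      Matrix.mulVec_mulVec, ← Matrix.mul_assoc,
      Matrix.mul_nonsing_inv _ hdet, Matrix.one_mul]
  clear_value e r
  have horth : Ψ.mulVec e ⬝ᵥ Ψ.mulVec e = Ψ.mulVec e ⬝ᵥ r := by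
    rw [mulVec_dotProduct_eq, hnormal, ← mulVec_dotProduct_eq]
  have hpyth : Ψ.mulVec e ⬝ᵥ Ψ.mulVec e ≤ r ⬝ᵥ r := by
    have h := dotProduct_self_nonneg (r - Ψ.mulVec e)
    rw [sub_dotProduct, dotProduct_sub, dotProduct_sub, dotProduct_comm r (Ψ.mulVec e)] at h
    linarith
  rw [le_div_iff₀ hs, mul_comm]
  refine (hsing e).trans ?_
  rw [euclNorm_eq_sqrt_dotProduct, euclNorm_eq_sqrt_dotProduct]
  exact Real.sqrt_le_sqrt hpyth
end

section
/- Let M, k be positive integers and let Ψ, Ψ̂ : Matrix (Fin M) (Fin k) ℝ, θ : Fin k → ℝ, κ, κ̂ : Fin M → ℝ, s > 0, and ε ≥ 0 with ε ≤ s/2. Assume: (i) Ψ.mulVec θ = κ; (ii) for every x, s · ‖x‖ ≤ ‖Ψ.mulVec x‖; (iii) for every x, ‖(Ψ̂ − Ψ).mulVec x‖ ≤ ε · ‖x‖, where all norms are Euclidean. Then Ψ̂ᵀ * Ψ̂ is invertible and the perturbed least-squares estimate θ̂ = ((Ψ̂ᵀ * Ψ̂)⁻¹ * Ψ̂ᵀ).mulVec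 κ̂ satisfies ‖θ̂ − θ‖ ≤ (2 / s) · ( ‖κ̂ − κ‖ + ε · ‖θ‖ ). -/
open Matrix in
theorem euclNorm_sq {d : ℕ} (v : Fin d → ℝ) : euclNorm v ^ 2 = v ⬝ᵥ v := by
  unfold euclNorm
  rw [Real.sq_sqrt (Finset.sum_nonneg fun i _ => sq_nonneg _)]
  simp [dotProduct, sq]

theorem euclNorm_nonneg {d : ℕ} (v : Fin d → ℝ) : 0 ≤ euclNorm v := Real.sqrt_nonneg _

theorem euclNorm_eq_norm {d : ℕ} (v : Fin d → ℝ) : euclNorm v = ‖WithLp.toLp 2 v‖ := by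
  simp [euclNorm, EuclideanSpace.norm_eq]

theorem euclNorm_sub_le {d : ℕ} (v w : Fin d → ℝ) :
    euclNorm (v - w) ≤ euclNorm v + euclNorm w := by
  simpa only [euclNorm_eq_norm, WithLp.toLp_sub] using norm_sub_le _ _

open Matrix in
theorem dotProduct_le_euclNorm_mul {d : ℕ} (v w : Fin d → ℝ) :
    v ⬝ᵥ w ≤ euclNorm v * euclNorm w :=
  Real.sum_mul_le_sqrt_mul_sqrt _ _ _

open Matrix in
/-- A solution `e` of the normal equations `Aᵀ A e = Aᵀ r` has `A e` equal to the orthogonal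
projection of `r` onto the range of `A`, whence the contraction bound. -/
theorem euclNorm_mulVec_le_of_normal_eq {m n : ℕ} (A : Matrix (Fin m) (Fin n) ℝ)
    (e : Fin n → ℝ) (r : Fin m → ℝ) (h : (Aᵀ * A) *ᵥ e = Aᵀ *ᵥ r) :
    euclNorm (A *ᵥ e) ≤ euclNorm r := by
  have h1 : (A *ᵥ e) ⬝ᵥ (A *ᵥ e) = (A *ᵥ e) ⬝ᵥ r := by
    have key : ∀ y : Fin m → ℝ, (A *ᵥ e) ⬝ᵥ y = e ⬝ᵥ (Aᵀ *ᵥ y) := fun y => by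
      rw [dotProduct_mulVec, vecMul_transpose]
    rw [key, key, mulVec_mulVec, h]
  have h2 := dotProduct_le_euclNorm_mul (A *ᵥ e) r
  rw [← h1, ← euclNorm_sq] at h2
  have := euclNorm_nonneg (A *ᵥ e)
  have := euclNorm_nonneg r
  by_contra! hlt
  nlinarith

/-- deterministic core of Theorem 3: if `Ψθ = κ`, the smallest singular
value of `Ψ` is at least `s > 0`, and the perturbation `Ψ̂ − Ψ` has operator norm at most
`ε ≤ s/2`, then `Ψ̂ᵀΨ̂` is invertible and the perturbed least-squares estimate
`θ̂ = (Ψ̂ᵀΨ̂)⁻¹Ψ̂ᵀκ̂` satisfies `‖θ̂ − θ‖ ≤ (2/s)(‖κ̂ − κ‖ + ε‖θ‖)`. -/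
theorem stmt_13 (M k : ℕ) (hM : 0 < M) (hk : 0 < k)
    (Ψ Ψhat : Matrix (Fin M) (Fin k) ℝ) (θ : Fin k → ℝ) (κ κhat : Fin M → ℝ)
    (s : ℝ) (hs : 0 < s) (ε : ℝ) (hε : 0 ≤ ε) (hεs : ε ≤ s / 2)
    (hθ : Ψ.mulVec θ = κ)
    (hsing : ∀ x : Fin k → ℝ, s * euclNorm x ≤ euclNorm (Ψ.mulVec x))
    (hpert : ∀ x : Fin k → ℝ, euclNorm ((Ψhat - Ψ).mulVec x) ≤ ε * euclNorm x) :
    IsUnit (Ψhat.transpose * Ψhat) ∧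
      euclNorm (((Ψhat.transpose * Ψhat)⁻¹ * Ψhat.transpose).mulVec κhat - θ)
        ≤ (2 / s) * (euclNorm (κhat - κ) + ε * euclNorm θ) := by
  have hlow : ∀ x : Fin k → ℝ, s / 2 * euclNorm x ≤ euclNorm (Ψhat.mulVec x) := fun x => by
    have h1 := euclNorm_sub_le (Ψhat.mulVec x) ((Ψhat - Ψ).mulVec x)
    have h2 : Ψhat.mulVec x - (Ψhat - Ψ).mulVec x = Ψ.mulVec x := by
      rw [Matrix.sub_mulVec]; abel
    rw [h2] at h1
    have := mul_le_mul_of_nonneg_right hεs (euclNorm_nonneg x)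
    linarith [hsing x, hpert x]
  have hunit : IsUnit (Ψhat.transpose * Ψhat) := by
    rw [← Matrix.mulVec_injective_iff_isUnit]
    refine (injective_iff_map_eq_zero (Ψhat.transpose * Ψhat).mulVecLin).2 fun x hx => ?_
    have hx' : (Ψhat.transpose * Ψhat).mulVec x = Ψhat.transpose.mulVec 0 := by
      rw [Matrix.mulVec_zero]; exact hx
    have h1 := (hlow x).trans (euclNorm_mulVec_le_of_normal_eq Ψhat x 0 hx')
    have h0 : euclNorm (0 : Fin M → ℝ) = 0 := by simp [euclNorm]
    have h2 : euclNorm x = 0 := by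
      have := euclNorm_nonneg x
      rw [h0] at h1
      nlinarith
    simpa [euclNorm_eq_norm] using h2
  refine ⟨hunit, ?_⟩
  set e := ((Ψhat.transpose * Ψhat)⁻¹ * Ψhat.transpose).mulVec κhat - θ with he
  have hnormal : (Ψhat.transpose * Ψhat).mulVec e
      = Ψhat.transpose.mulVec (κhat - Ψhat.mulVec θ) := by
    rw [he, Matrix.mulVec_sub, Matrix.mulVec_sub, Matrix.mulVec_mulVec, Matrix.mulVec_mulVec,
      Matrix.mul_nonsing_inv_cancel_left _ _ ((Matrix.isUnit_iff_isUnit_det _).1 hunit)]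
  have hr : κhat - Ψhat.mulVec θ = (κhat - κ) - (Ψhat - Ψ).mulVec θ := by
    rw [Matrix.sub_mulVec, hθ]; abel
  have h1 := (hlow e).trans (euclNorm_mulVec_le_of_normal_eq Ψhat e _ hnormal)
  rw [hr] at h1
  have h2 := h1.trans ((euclNorm_sub_le _ _).trans (add_le_add_right (hpert θ) _))
  calc euclNorm e = 2 / s * (s / 2 * euclNorm e) := by field_simp
    _ ≤ _ := mul_le_mul_of_nonneg_left h2 (by positivity)
end
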